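/- arXiv:1908.09660 — 2 statements merged into one kernel-verified Lean document; each statement's English description precedes it below -/
import Mathlib

section
/- Let V : ℝⁿ → [0,∞) be a finite-step control Lyapunov function for time step M with respect to a measurement function ω, and let q : X → U^M be the admissible finite-step feedback control law associated with V. Then q asymptotically ω-stabilizes the set A := ω⁻¹(0) for the system, i.e., there exists a class-KL function β such that ω(x_q(t,ξ)) ≤ β(ω(ξ), t) for all ξ ∈ X and all t ∈ ℕ. -/
open Filter Finset NNReal

noncomputable section

/-- A class-K function on `[0,∞)`: continuous, strictly increasing, zero at zero. -/
def ClassK (κ : ℝ≥0 → ℝ≥0) : Prop :=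
  Continuous κ ∧ StrictMono κ ∧ κ 0 = 0

/-- A class-K∞ function: class K and unbounded. -/
def ClassKInf (κ : ℝ≥0 → ℝ≥0) : Prop :=
  ClassK κ ∧ Filter.Tendsto κ Filter.atTop Filter.atTop

/-- A class-KL function. -/
def ClassKL (β : ℝ≥0 → ℝ≥0 → ℝ≥0) : Prop :=
  Continuous (fun p : ℝ≥0 × ℝ≥0 => β p.1 p.2) ∧
  (∀ s : ℝ≥0, ClassK fun r => β r s) ∧
  (∀ r : ℝ≥0, Antitone (fun s => β r s) ∧
    Filter.Tendsto (fun s => β r s) Filter.atTop (nhds 0))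

/-- The iterates `g^j(ξ, u)` of the control system `x⁺ = g(x,u)` under the
control sequence `u` starting from `ξ`. -/
def iter {n m : ℕ} (g : (Fin n → ℝ) → (Fin m → ℝ) → (Fin n → ℝ)) (ξ : Fin n → ℝ)
    (u : ℕ → Fin m → ℝ) : ℕ → Fin n → ℝ
  | 0 => ξ
  | j + 1 => g (iter g ξ u j) (u j)

/-- `q : X → U^M` is an admissible finite-step feedback control law (afcl) of length `M`
for the system `g` with state constraint set `X`, input constraint set `U` and
measurement function `ω`. -/
def IsAfcl {n m : ℕ} (ω : (Fin n → ℝ) → ℝ≥0) (X : Set (Fin n → ℝ)) (U : Set (Fin m → ℝ))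
    (g : (Fin n → ℝ) → (Fin m → ℝ) → (Fin n → ℝ)) (M : ℕ)
    (q : (Fin n → ℝ) → ℕ → Fin m → ℝ) : Prop :=
  (∀ ξ ∈ X, ∀ j < M, q ξ j ∈ U) ∧
  (∀ ξ ∈ X, ∀ j : ℕ, 1 ≤ j → j ≤ M → iter g ξ (q ξ) j ∈ X) ∧
  (∀ j : ℕ, 1 ≤ j → j ≤ M → ∃ κ : ℝ≥0 → ℝ≥0, ClassK κ ∧
    ∀ ξ ∈ X, ω (iter g ξ (q ξ) j) ≤ κ (ω ξ))

/-- States of the closed loop under the `M`-step feedback `q` at time instants `kM`. -/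
def loopBase {n m : ℕ} (g : (Fin n → ℝ) → (Fin m → ℝ) → (Fin n → ℝ)) (M : ℕ)
    (q : (Fin n → ℝ) → ℕ → Fin m → ℝ) (ξ : Fin n → ℝ) : ℕ → Fin n → ℝ
  | 0 => ξ
  | k + 1 => iter g (loopBase g M q ξ k) (q (loopBase g M q ξ k)) M

/-- The closed-loop trajectory `x_q(t, ξ)`: for `t = kM + j`, `j ∈ {0,…,M-1}`,
`x_q(kM + j) = g^j(x_q(kM), q(x_q(kM)))`. -/
def closedLoop {n m : ℕ} (g : (Fin n → ℝ) → (Fin m → ℝ) → (Fin n → ℝ)) (M : ℕ)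
    (q : (Fin n → ℝ) → ℕ → Fin m → ℝ) (ξ : Fin n → ℝ) (t : ℕ) : Fin n → ℝ :=
  iter g (loopBase g M q ξ (t / M)) (q (loopBase g M q ξ (t / M))) (t % M)

/-!
Along the sampling instants `kM` the Lyapunov function decays at least as fast as the iterates of
`α`, so `ω` at time `kM` is at most `ulα⁻¹ (α^[k] (olα (ω ξ)))`; between two sampling instants the
admissibility bounds cost one more class-K function. Since `α` is continuous and lies below the
identity off `0`, its iterates decrease to its only fixed point `0`. This gives a bound which is
class K in `ω ξ` and decreases to `0` along the discrete times `t`. A step function of continuous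
time would only be right- or left-continuous, so each step is ramped down linearly to `0` over the
next unit of time, and the supremum of the ramps is taken: that is a class-KL function.
-/

namespace ClassK

variable {κ κ' : ℝ≥0 → ℝ≥0}

theorem continuous (h : ClassK κ) : Continuous κ := h.1

theorem strictMono (h : ClassK κ) : StrictMono κ := h.2.1

theorem map_zero (h : ClassK κ) : κ 0 = 0 := h.2.2

theorem comp (h : ClassK κ) (h' : ClassK κ') : ClassK (κ ∘ κ') :=
  ⟨h.continuous.comp h'.continuous, h.strictMono.comp h'.strictMono, by
    rw [Function.comp_apply, h'.map_zero, h.map_zero]⟩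

theorem iterate (h : ClassK κ) (k : ℕ) : ClassK κ^[k] :=
  ⟨h.continuous.iterate k, h.strictMono.iterate k, Function.iterate_fixed h.map_zero k⟩

theorem tendsto_nhds_zero (h : ClassK κ) : Tendsto κ (nhds 0) (nhds 0) :=
  h.continuous.tendsto' 0 0 h.map_zero

end ClassK

theorem classK_orderIso (e : ℝ≥0 ≃o ℝ≥0) : ClassK e :=
  ⟨e.continuous, e.strictMono, e.map_bot⟩

theorem ClassKInf.exists_orderIso_eq {κ : ℝ≥0 → ℝ≥0} (h : ClassKInf κ) :
    ∃ e : ℝ≥0 ≃o ℝ≥0, e = κ := by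
  have hsurj : Function.Surjective κ := fun y =>
    mem_range_of_exists_le_of_exists_ge h.1.continuous ⟨0, h.1.map_zero.trans_le zero_le⟩
      (h.2.eventually_ge_atTop y).exists
  exact ⟨h.1.strictMono.orderIsoOfSurjective κ hsurj, rfl⟩

theorem exists_classK_majorant {ι : Type*} (s : Finset ι) {κ : ι → ℝ≥0 → ℝ≥0}
    (hκ : ∀ i ∈ s, ClassK (κ i)) : ∃ K, ClassK K ∧ id ≤ K ∧ ∀ i ∈ s, κ i ≤ K := by
  refine ⟨fun r => r + ∑ i ∈ s, κ i r, ⟨?_, ?_, ?_⟩, fun r => le_self_add, fun i hi r => ?_⟩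
  · exact continuous_id.add (continuous_finsetSum s fun i hi => (hκ i hi).continuous)
  · exact strictMono_id.add_monotone fun r r' hr =>
      Finset.sum_le_sum fun i hi => (hκ i hi).strictMono.monotone hr
  · exact (zero_add _).trans (Finset.sum_eq_zero fun i hi => (hκ i hi).map_zero)
  · exact (Finset.single_le_sum (f := fun i => κ i r) (fun _ _ => zero_le) hi).trans le_add_self

theorem tendsto_iterate_nhds_bot {E : Type*} [ConditionallyCompleteLinearOrderBot E]
    [TopologicalSpace E] [OrderTopology E] {f : E → E} (hf : Continuous f) (hle : f ≤ id)
    (hfix : ∀ x, Function.IsFixedPt f x → x = ⊥) (x : E) :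
    Tendsto (fun k => f^[k] x) atTop (nhds ⊥) := by
  have hanti : Antitone fun k => f^[k] x := fun _ _ hkl =>
    Function.antitone_iterate_of_le_id hle hkl x
  have hlim := tendsto_atTop_ciInf hanti (OrderBot.bddBelow _)
  rwa [hfix _ (isFixedPt_of_tendsto_iterate hlim hf.continuousAt)] at hlim

theorem apply_iterate_le_iterate_of_mapsTo {S E : Type*} [Preorder E] {X : Set S} {F : S → S}
    {V : S → E} {α : E → E} (hα : Monotone α) (hF : Set.MapsTo F X X)
    (hV : ∀ x ∈ X, V (F x) ≤ α (V x)) {x : S} (hx : x ∈ X) (k : ℕ) : V (F^[k] x) ≤ α^[k] (V x) := by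
  refine hα.seq_le_seq (x := fun i => V (F^[i] x)) (y := fun i => α^[i] (V x)) k le_rfl
    (fun i _ => ?_) fun i _ => (Function.iterate_succ_apply' α i (V x)).ge
  rw [Function.iterate_succ_apply']
  exact hV _ (hF.iterate i hx)

/-- The supremum of the ramps that equal `a k` on `[0, k]` and fall linearly to `0` on `[k, k + 1]`;
truncated subtraction encodes both the plateau and the cut-off. For antitone `a` it is a continuous
antitone function of time that dominates `a`. -/
def rampSup (a : ℕ → ℝ≥0) (s : ℝ≥0) : ℝ≥0 :=
  ⨆ k : ℕ, a k * (1 - (s - k))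

section RampSup

variable {a b : ℕ → ℝ≥0} {s : ℝ≥0}

theorem ramp_eq_one {k : ℕ} (h : s ≤ k) : 1 - (s - k) = 1 := by
  rw [tsub_eq_zero_of_le h, tsub_zero]

theorem bddAbove_range_ramp (ha : Antitone a) (s : ℝ≥0) :
    BddAbove (Set.range fun k : ℕ => a k * (1 - (s - k))) :=
  ⟨a 0, Set.forall_mem_range.2 fun k => mul_le_of_le_of_le_one (ha k.zero_le) tsub_le_self⟩

theorem le_rampSup (ha : Antitone a) {k : ℕ} (h : s ≤ k) : a k ≤ rampSup a s := by
  calc a k = a k * (1 - (s - k)) := by rw [ramp_eq_one h, mul_one]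
    _ ≤ rampSup a s := le_ciSup (bddAbove_range_ramp ha s) k

theorem rampSup_le_floor (ha : Antitone a) (s : ℝ≥0) : rampSup a s ≤ a ⌊s⌋₊ := by
  refine ciSup_le fun k => ?_
  rcases le_or_gt ⌊s⌋₊ k with hk | hk
  · exact mul_le_of_le_of_le_one (ha hk) tsub_le_self
  · have hks : (k : ℝ≥0) + 1 ≤ s := by exact_mod_cast (Nat.le_floor_iff zero_le).1 hk
    rw [tsub_eq_zero_of_le (le_tsub_of_add_le_left hks), mul_zero]
    exact zero_le

theorem antitone_rampSup (ha : Antitone a) : Antitone (rampSup a) := fun s s' hs =>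
  ciSup_mono (bddAbove_range_ramp ha s) fun k => by gcongr

theorem tendsto_rampSup (ha : Antitone a) (hlim : Tendsto a atTop (nhds 0)) :
    Tendsto (rampSup a) atTop (nhds 0) :=
  tendsto_of_tendsto_of_tendsto_of_le_of_le tendsto_const_nhds
    (hlim.comp tendsto_nat_floor_atTop) (fun _ => zero_le) (rampSup_le_floor ha)

theorem rampSup_eq_sup_range (ha : Antitone a) {N : ℕ} (h : s ≤ N) :
    rampSup a s = (range (N + 1)).sup fun k => a k * (1 - (s - k)) := by
  refine le_antisymm (ciSup_le fun k => ?_)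
    (Finset.sup_le fun k _ => le_ciSup (bddAbove_range_ramp ha s) k)
  rcases le_total k N with hk | hk
  · exact le_sup (f := fun k : ℕ => a k * (1 - (s - k))) (mem_range_succ_iff.2 hk)
  · calc a k * (1 - (s - k)) ≤ a N * 1 := mul_le_mul' (ha hk) tsub_le_self
      _ = a N * (1 - (s - N)) := by rw [ramp_eq_one h]
      _ ≤ _ := le_sup (f := fun k : ℕ => a k * (1 - (s - k))) (self_mem_range_succ N)

theorem rampSup_lt_rampSup (ha : Antitone a) (hb : Antitone b) (hab : ∀ k, a k < b k)
    (s : ℝ≥0) : rampSup a s < rampSup b s := by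
  have hpos : 0 < rampSup b s :=
    (zero_le.trans_lt (hab ⌈s⌉₊)).trans_le (le_rampSup hb (Nat.le_ceil s))
  rw [rampSup_eq_sup_range ha (Nat.le_ceil s), Finset.sup_lt_iff hpos]
  intro k _
  rcases eq_zero_or_pos (1 - (s - k)) with hzero | hramp
  · rwa [hzero, mul_zero]
  · exact (mul_lt_mul_of_pos_right (hab k) hramp).trans_le (le_ciSup (bddAbove_range_ramp hb s) k)

theorem continuous_rampSup {Y : Type*} [TopologicalSpace Y] {c : Y → ℕ → ℝ≥0}
    (hc : ∀ k, Continuous fun y => c y k) (hanti : ∀ y, Antitone (c y)) :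
    Continuous fun p : Y × ℝ≥0 => rampSup (c p.1) p.2 := by
  refine continuous_iff_continuousAt.2 fun ⟨y, s⟩ => ?_
  obtain ⟨N, hN⟩ := exists_nat_gt s
  have hsup : Continuous fun p : Y × ℝ≥0 =>
      (range (N + 1)).sup fun k => c p.1 k * (1 - (p.2 - k)) :=
    Continuous.finset_sup_apply fun k _ => by fun_prop
  refine hsup.continuousAt.congr ?_
  filter_upwards [continuous_snd.continuousAt.eventually (gt_mem_nhds hN)] with p hp
  exact (rampSup_eq_sup_range (hanti p.1) hp.le).symm

end RampSup

theorem exists_classKL_ge {c : ℕ → ℝ≥0 → ℝ≥0} (hK : ∀ t, ClassK (c t))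
    (hanti : ∀ r, Antitone fun t => c t r) (hlim : ∀ r, Tendsto (fun t => c t r) atTop (nhds 0)) :
    ∃ β, ClassKL β ∧ ∀ r (t : ℕ), c t r ≤ β r t := by
  have hcont : Continuous fun p : ℝ≥0 × ℝ≥0 => rampSup (fun t => c t p.1) p.2 :=
    continuous_rampSup (fun t => (hK t).continuous) hanti
  refine ⟨fun r => rampSup fun t => c t r, ⟨hcont, fun s => ⟨?_, ?_, ?_⟩, fun r => ⟨?_, ?_⟩⟩, ?_⟩
  · exact hcont.comp (Continuous.prodMk_left s)
  · exact fun r r' hr =>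
      rampSup_lt_rampSup (hanti r) (hanti r') (fun t => (hK t).strictMono hr) s
  · exact le_bot_iff.1 ((rampSup_le_floor (hanti 0) s).trans_eq (hK ⌊s⌋₊).map_zero)
  · exact antitone_rampSup (hanti r)
  · exact tendsto_rampSup (hanti r) (hlim r)
  · exact fun r t => le_rampSup (hanti r) le_rfl

theorem exists_classKL_ge_iterate_div {κ α γ : ℝ≥0 → ℝ≥0} (hκ : ClassK κ) (hα : ClassK α)
    (hγ : ClassK γ) (hαlt : ∀ s, 0 < s → α s < s) {M : ℕ} (hM : 0 < M) :
    ∃ β, ClassKL β ∧ ∀ r (t : ℕ), κ (α^[t / M] (γ r)) ≤ β r t := by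
  have hle : α ≤ id := fun s =>
    (eq_zero_or_pos s).elim (fun h => by rw [h, hα.map_zero, id]) fun h => (hαlt s h).le
  have hfix : ∀ s, Function.IsFixedPt α s → s = 0 := fun s hs =>
    (eq_zero_or_pos s).resolve_right fun h => (hαlt s h).ne hs
  refine exists_classKL_ge (c := fun t => κ ∘ α^[t / M] ∘ γ)
    (fun t => hκ.comp ((hα.iterate _).comp hγ)) (fun r t t' ht => ?_) fun r => ?_
  · exact hκ.strictMono.monotone
      (Function.antitone_iterate_of_le_id hle (Nat.div_le_div_right ht) (γ r))
  · exact hκ.tendsto_nhds_zero.comp ((tendsto_iterate_nhds_bot hα.continuous hle hfix (γ r)).comp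
      (Nat.tendsto_div_const_atTop hM.ne'))

section ClosedLoop

variable {n m : ℕ} {g : (Fin n → ℝ) → (Fin m → ℝ) → (Fin n → ℝ)} {M : ℕ}
  {q : (Fin n → ℝ) → ℕ → Fin m → ℝ}

theorem loopBase_eq_iterate (ξ : Fin n → ℝ) (k : ℕ) :
    loopBase g M q ξ k = (fun x => iter g x (q x) M)^[k] ξ := by
  induction k with
  | zero => rfl
  | succ k ih => rw [Function.iterate_succ_apply', ← ih, loopBase]

theorem IsAfcl.exists_classK_bound {ω : (Fin n → ℝ) → ℝ≥0} {X : Set (Fin n → ℝ)}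
    {U : Set (Fin m → ℝ)} (hq : IsAfcl ω X U g M q) :
    ∃ κ, ClassK κ ∧ ∀ ξ ∈ X, ∀ j ≤ M, ω (iter g ξ (q ξ) j) ≤ κ (ω ξ) := by
  choose! κ hκ hbound using hq.2.2
  obtain ⟨K, hK, hid, hle⟩ := exists_classK_majorant (Icc 1 M) fun j hj =>
    hκ j (mem_Icc.1 hj).1 (mem_Icc.1 hj).2
  refine ⟨K, hK, fun ξ hξ j hjM => ?_⟩
  rcases j.eq_zero_or_pos with rfl | hj
  · exact hid (ω ξ)
  · exact (hbound j hj hjM ξ hξ).trans (hle j (mem_Icc.2 ⟨hj, hjM⟩) (ω ξ))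

end ClosedLoop

/-- `φ j ξ` stands for `g^j(ξ, q(ξ))`, so that `φ (t % M) ((φ M)^[t / M] ξ)` is `x_q(t, ξ)`. -/
theorem fsclf_afcl_stabilizes_general {S : Type*} {X : Set S} {φ : ℕ → S → S} {M : ℕ}
    (hM : 0 < M) {ω V : S → ℝ≥0} (hX : Set.MapsTo (φ M) X X)
    {κ : ℝ≥0 → ℝ≥0} (hκ : ClassK κ) (hbound : ∀ ξ ∈ X, ∀ j < M, ω (φ j ξ) ≤ κ (ω ξ))
    {ulα olα : ℝ≥0 → ℝ≥0} (hulα : ClassKInf ulα) (holα : ClassK olα)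
    (hlower : ∀ ξ ∈ X, ulα (ω ξ) ≤ V ξ) (hupper : ∀ ξ ∈ X, V ξ ≤ olα (ω ξ))
    {α : ℝ≥0 → ℝ≥0} (hα : ClassK α) (hαlt : ∀ s, 0 < s → α s < s)
    (hdecay : ∀ ξ ∈ X, V (φ M ξ) ≤ α (V ξ)) :
    ∃ β, ClassKL β ∧ ∀ ξ ∈ X, ∀ t : ℕ, ω (φ (t % M) ((φ M)^[t / M] ξ)) ≤ β (ω ξ) t := by
  obtain ⟨e, rfl⟩ := hulα.exists_orderIso_eq
  obtain ⟨β, hβ, hle⟩ :=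
    exists_classKL_ge_iterate_div (hκ.comp (classK_orderIso e.symm)) hα holα hαlt hM
  refine ⟨β, hβ, fun ξ hξ t => le_trans ?_ (hle (ω ξ) t)⟩
  have hmem : (φ M)^[t / M] ξ ∈ X := hX.iterate (t / M) hξ
  have hsample : e (ω ((φ M)^[t / M] ξ)) ≤ α^[t / M] (olα (ω ξ)) :=
    calc e (ω ((φ M)^[t / M] ξ)) ≤ V ((φ M)^[t / M] ξ) := hlower _ hmem
      _ ≤ α^[t / M] (V ξ) :=
        apply_iterate_le_iterate_of_mapsTo hα.strictMono.monotone hX hdecay hξ _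
      _ ≤ α^[t / M] (olα (ω ξ)) := (hα.iterate _).strictMono.monotone (hupper ξ hξ)
  calc ω (φ (t % M) ((φ M)^[t / M] ξ)) ≤ κ (ω ((φ M)^[t / M] ξ)) :=
        hbound _ hmem _ (Nat.mod_lt t hM)
    _ ≤ κ (e.symm (α^[t / M] (olα (ω ξ)))) :=
        hκ.strictMono.monotone ((e.le_symm_apply).2 hsample)

/-- Proposition: an fs-CLF together with its associated afcl
asymptotically ω-stabilizes `A = ω⁻¹(0)`. -/
theorem fsclf_afcl_stabilizes {n m : ℕ}
    (X : Set (Fin n → ℝ)) (U : Set (Fin m → ℝ))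
    (g : (Fin n → ℝ) → (Fin m → ℝ) → (Fin n → ℝ))
    (hg : ContinuousOn (fun p : (Fin n → ℝ) × (Fin m → ℝ) => g p.1 p.2) (X ×ˢ U))
    (ω : (Fin n → ℝ) → ℝ≥0) (hω : Continuous ω) (hωzero : ∃ x, ω x = 0)
    (M : ℕ) (hM : 1 ≤ M)
    (V : (Fin n → ℝ) → ℝ≥0) (hV : Continuous V)
    (ulα olα : ℝ≥0 → ℝ≥0) (hulα : ClassKInf ulα) (holα : ClassKInf olα)
    (hsandwich : ∀ ξ, ulα (ω ξ) ≤ V ξ ∧ V ξ ≤ olα (ω ξ))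
    (q : (Fin n → ℝ) → ℕ → Fin m → ℝ) (hq : IsAfcl ω X U g M q)
    (α : ℝ≥0 → ℝ≥0) (hα : ClassKInf α) (hαlt : ∀ s : ℝ≥0, 0 < s → α s < s)
    (hdecay : ∀ ξ ∈ X, V (iter g ξ (q ξ) M) ≤ α (V ξ)) :
    ∃ β : ℝ≥0 → ℝ≥0 → ℝ≥0, ClassKL β ∧
      ∀ ξ ∈ X, ∀ t : ℕ, ω (closedLoop g M q ξ t) ≤ β (ω ξ) (t : ℝ≥0) := by
  obtain ⟨κ, hκ, hbound⟩ := hq.exists_classK_bound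
  simpa only [closedLoop, loopBase_eq_iterate] using
    fsclf_afcl_stabilizes_general (φ := fun j ξ => iter g ξ (q ξ) j) hM
      (fun ξ hξ => hq.2.1 ξ hξ M hM le_rfl) hκ (fun ξ hξ j hj => hbound ξ hξ j hj.le)
      hulα holα.1 (fun ξ _ => (hsandwich ξ).1) (fun ξ _ => (hsandwich ξ).2) hα.1 hαlt hdecay
end
end

section
/- Let α : [0,∞) → [0,∞) be of class K∞ with α(r) < r for all r > 0, let M ∈ ℕ*, and let χ be of class K∞ with χ^M = α (M-fold composition). Then for every t ∈ ℕ written as t = kM + j with k ∈ ℕ and j ∈ {0,…,M−1}, and for every r ≥ 0, one has α^k(r) ≤ χ^t(α⁻¹(r)), where α⁻¹ denotes the inverse of α on [0,∞) and α^k the k-fold composition of α. -/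
open Filter Finset NNReal

noncomputable section

/-!
Since `χ` is monotone on a linear order, `x < χ x` would force `x < χ^M x`; so `χ^M = α ≤ id` gives
`χ ≤ id`, and the orbits of `χ` decrease. Starting the orbit at `x = α⁻¹ r`, the value
`α^k r = α^(k+1) x` is reached at time `(k + 1) * M`, which is later than `t = k * M + j`.
-/

theorem map_le_self_of_forall_bot_lt {X : Type*} [PartialOrder X] [OrderBot X] {f : X → X}
    (hbot : f ⊥ = ⊥) (hlt : ∀ x, ⊥ < x → f x < x) (x : X) : f x ≤ x := by
  obtain rfl | hx := eq_bot_or_bot_lt x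
  · exact hbot.le
  · exact (hlt x hx).le

section LinearOrder

variable {X : Type*} [LinearOrder X] {χ : X → X} {M : ℕ}

theorem map_le_self_of_iterate_le_self (hχ : Monotone χ) (hM : 0 < M) {x : X}
    (hx : χ^[M] x ≤ x) : χ x ≤ x := by
  have hcomm : Function.Commute χ id := Function.Semiconj.id_right
  exact (hcomm.iterate_pos_le_iff_map_le hχ strictMono_id hM).mp (by simpa using hx)

theorem iterate_iterate_succ_le_iterate (hχ : Monotone χ) (hM : 0 < M) {x : X}
    (hx : χ^[M] x ≤ x) {t k : ℕ} (ht : t ≤ M * (k + 1)) : (χ^[M])^[k + 1] x ≤ χ^[t] x := by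
  rw [← Function.iterate_mul]
  exact hχ.antitone_iterate_of_map_le (map_le_self_of_iterate_le_self hχ hM hx) ht

theorem iterate_interpolation_bound_general {α αinv : X → X} (hα : ∀ x, α x ≤ x)
    (hχ : Monotone χ) (hχM : χ^[M] = α) (hinvr : Function.RightInverse αinv α)
    {t k j : ℕ} (hj : j < M) (ht : t = k * M + j) (r : X) : α^[k] r ≤ χ^[t] (αinv r) := by
  have htM : t ≤ M * (k + 1) := by rw [ht, Nat.mul_succ, mul_comm k]; gcongr
  subst hχM
  calc (χ^[M])^[k] r = (χ^[M])^[k + 1] (αinv r) := by rw [Function.iterate_succ_apply, hinvr r]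
    _ ≤ χ^[t] (αinv r) := iterate_iterate_succ_le_iterate hχ (Nat.zero_lt_of_lt hj) (hα _) htM

end LinearOrder

/-- for `α ∈ K∞` with `α(r) < r` on `(0,∞)`, `χ ∈ K∞` with `χ^M = α`,
and `t = kM + j` with `j ∈ {0,…,M-1}`, one has `α^k(r) ≤ χ^t(α⁻¹(r))` for all `r ≥ 0`. -/
theorem iterate_interpolation_bound
    (α : ℝ≥0 → ℝ≥0) (hα : ClassKInf α) (hαlt : ∀ r : ℝ≥0, 0 < r → α r < r)
    (M : ℕ) (hM : 1 ≤ M)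
    (χ : ℝ≥0 → ℝ≥0) (hχ : ClassKInf χ) (hχM : χ^[M] = α)
    (αinv : ℝ≥0 → ℝ≥0)
    (hinvl : Function.LeftInverse αinv α) (hinvr : Function.RightInverse αinv α) :
    ∀ t k j : ℕ, j < M → t = k * M + j →
      ∀ r : ℝ≥0, α^[k] r ≤ χ^[t] (αinv r) :=
  fun t k j hj ht =>
    iterate_interpolation_bound_general (map_le_self_of_forall_bot_lt hα.1.2.2 hαlt)
      hχ.1.2.1.monotone hχM hinvr hj ht
end
end
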